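/- Let D′ ⋐ D ⊂ ℝ^{2n+1} be bounded open sets and let k ≥ 0 and s = k + n + 2. Then there exists a constant C > 0 such that for every smooth function f : cl(D) → ℝ^m and every multi-index I with entries in {1,…,2n} and |I| ≤ k, one has sup_{x ∈ cl(D′)} |X_I f(x)| ≤ C ‖f‖_{D,s}. -/

import Mathlib

open MeasureTheory Bornology

noncomputable section

variable {E : Type*} [NormedAddCommGroup E] [NormedSpace ℝ E]

/-- The standard contact form `η₀ = dx^{2n+1} - Σ x^{n+j} dx^j` on `ℝ^{2n+1}`
(0-indexed coordinates): `η₀(x)(v) = v_{2n} - Σ_{j<n} x_{n+j} v_j`. -/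
def eta0 (n : ℕ) (x v : Fin (2*n+1) → ℝ) : ℝ :=
  v ⟨2*n, by omega⟩ -
    ∑ j : Fin n, x ⟨n + j, by have := j.2; omega⟩ * v ⟨j, by have := j.2; omega⟩

/-- `dη₀ = Σ_{j<n} dx^j ∧ dx^{n+j}`. -/
def dEta0 (n : ℕ) (u v : Fin (2*n+1) → ℝ) : ℝ :=
  ∑ j : Fin n,
    (u ⟨j, by have := j.2; omega⟩ * v ⟨n + j, by have := j.2; omega⟩ -
     u ⟨n + j, by have := j.2; omega⟩ * v ⟨j, by have := j.2; omega⟩)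

/-- The horizontal vector fields: for `j < n`, `X_j = ∂_j + x_{n+j} ∂_{2n}`;
for `n ≤ j < 2n`, `X_j = ∂_j` (0-indexed). -/
def Xvec (n : ℕ) (j : Fin (2*n)) (x : Fin (2*n+1) → ℝ) : Fin (2*n+1) → ℝ :=
  if h : (j : ℕ) < n then
    (Pi.single (⟨j, by omega⟩ : Fin (2*n+1)) 1 : Fin (2*n+1) → ℝ)
      + x ⟨n + j, by omega⟩ • (Pi.single (⟨2*n, by omega⟩ : Fin (2*n+1)) 1 : Fin (2*n+1) → ℝ)
  else
    (Pi.single (⟨j, by have := j.2; omega⟩ : Fin (2*n+1)) 1 : Fin (2*n+1) → ℝ)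

/-- The horizontal derivative `X_j f`. -/
def hDeriv (n : ℕ) (j : Fin (2*n)) (f : (Fin (2*n+1) → ℝ) → E)
    (x : Fin (2*n+1) → ℝ) : E :=
  fderiv ℝ f x (Xvec n j x)

/-- Iterated horizontal derivative `X_I f = X_{i₁} ⋯ X_{i_t} f`. -/
def XI (n : ℕ) : List (Fin (2*n)) → ((Fin (2*n+1) → ℝ) → E) → ((Fin (2*n+1) → ℝ) → E)
  | [], f => f
  | j :: I, f => hDeriv n j (XI n I f)

/-- Squared Folland–Stein norm `‖f‖_{D,s}² = Σ_{|I| ≤ s} ∫_D ‖X_I f‖²`. -/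
def fsNormSq (n : ℕ) (D : Set (Fin (2*n+1) → ℝ)) (s : ℕ)
    (f : (Fin (2*n+1) → ℝ) → E) : ℝ :=
  ∑ t ∈ Finset.range (s+1), ∑ I : Fin t → Fin (2*n),
    ∫ x in D, ‖XI n (List.ofFn I) f x‖^2

/-- The Folland–Stein norm `‖f‖_{D,s}`. -/
def fsNorm (n : ℕ) (D : Set (Fin (2*n+1) → ℝ)) (s : ℕ)
    (f : (Fin (2*n+1) → ℝ) → E) : ℝ :=
  Real.sqrt (fsNormSq n D s f)

/-- Ordinary partial derivative `∂_i f`. -/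
def pDeriv (n : ℕ) (i : Fin (2*n+1)) (f : (Fin (2*n+1) → ℝ) → E)
    (x : Fin (2*n+1) → ℝ) : E :=
  fderiv ℝ f x (Pi.single i 1 : Fin (2*n+1) → ℝ)

/-- Iterated ordinary partial derivative. -/
def pI (n : ℕ) : List (Fin (2*n+1)) → ((Fin (2*n+1) → ℝ) → E) → ((Fin (2*n+1) → ℝ) → E)
  | [], f => f
  | i :: I, f => pDeriv n i (pI n I f)

/-- The Reeb derivative `T₀ f = ∂_{2n} f` (0-indexed). -/
def T0Deriv (n : ℕ) (f : (Fin (2*n+1) → ℝ) → E) (x : Fin (2*n+1) → ℝ) : E :=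
  fderiv ℝ f x (Pi.single (⟨2*n, by omega⟩ : Fin (2*n+1)) 1 : Fin (2*n+1) → ℝ)

/-- `X` is a contact vector field on `D`:  `dη₀(X, X_j) + X_j(η₀(X)) = 0` for all
horizontal `X_j`. -/
def IsContactVF (n : ℕ) (D : Set (Fin (2*n+1) → ℝ))
    (X : (Fin (2*n+1) → ℝ) → (Fin (2*n+1) → ℝ)) : Prop :=
  ∀ j : Fin (2*n), ∀ x ∈ D,
    dEta0 n (X x) (Xvec n j x) + hDeriv n j (fun y => eta0 n y (X y)) x = 0

/-- The contact vector field with generating function `g`: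
`X_g = g T₀ + Σ_j (-(X_{n+j} g) X_j + (X_j g) X_{n+j})`. -/
def genVF (n : ℕ) (g : (Fin (2*n+1) → ℝ) → ℝ) (x : Fin (2*n+1) → ℝ) :
    Fin (2*n+1) → ℝ :=
  g x • (Pi.single (⟨2*n, by omega⟩ : Fin (2*n+1)) 1 : Fin (2*n+1) → ℝ)
  + ∑ j : Fin n,
      (-(hDeriv n (⟨n + j, by have := j.2; omega⟩ : Fin (2*n)) g x) •
          Xvec n (⟨j, by have := j.2; omega⟩ : Fin (2*n)) x
        + (hDeriv n (⟨j, by have := j.2; omega⟩ : Fin (2*n)) g x) •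
          Xvec n (⟨n + j, by have := j.2; omega⟩ : Fin (2*n)) x)


open Set Filter Topology Metric

abbrev VV (n : ℕ) := Fin (2*n+1) → ℝ

def ez (n : ℕ) : VV n := Pi.single (Fin.last (2*n)) 1

def lf (n : ℕ) (j : Fin (2*n)) : VV n →L[ℝ] ℝ :=
  if h : (j : ℕ) < n then ContinuousLinearMap.proj (⟨n + j, by omega⟩ : Fin (2*n+1)) else 0

theorem Xvec_eq (n : ℕ) (j : Fin (2*n)) (x : VV n) :
    Xvec n j x = Pi.single j.castSucc 1 + lf n j x • ez n := by
  unfold Xvec lf ez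
  split_ifs with h
  · rfl
  · simp; rfl

theorem lf_ez (n : ℕ) (j : Fin (2*n)) : lf n j (ez n) = 0 := by
  unfold lf ez
  split_ifs with h
  · simp only [ContinuousLinearMap.proj_apply]
    rw [Pi.single_eq_of_ne]
    intro h'
    have := congrArg Fin.val h'
    simp at this
    omega
  · simp

theorem contDiff_Xvec (n : ℕ) (j : Fin (2*n)) : ContDiff ℝ (⊤:ℕ∞) (Xvec n j) := by
  have : Xvec n j = fun x => Pi.single j.castSucc 1 + lf n j x • ez n := by
    funext x; exact Xvec_eq n j x
  rw [this]
  exact contDiff_const.add ((lf n j).contDiff.smul contDiff_const)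

theorem contDiff_hDeriv {n : ℕ} {j : Fin (2*n)} {g : VV n → E} (hg : ContDiff ℝ (⊤:ℕ∞) g) :
    ContDiff ℝ (⊤:ℕ∞) (hDeriv n j g) := by
  unfold hDeriv
  exact (hg.fderiv_right (m := (⊤:ℕ∞)) (by simp)).clm_apply (contDiff_Xvec n j)

theorem contDiff_XI {n : ℕ} (J : List (Fin (2*n))) {g : VV n → E} (hg : ContDiff ℝ (⊤:ℕ∞) g) :
    ContDiff ℝ (⊤:ℕ∞) (XI n J g) := by
  induction J with
  | nil => exact hg
  | cons j J ih => exact contDiff_hDeriv ih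

theorem XI_append {n : ℕ} (J I : List (Fin (2*n))) (g : VV n → E) :
    XI n J (XI n I g) = XI n (J ++ I) g := by
  induction J with
  | nil => rfl
  | cons j J ih => simp only [List.cons_append, XI, ih]

theorem hDeriv_comm {n : ℕ} (hn : 1 ≤ n) {g : VV n → E} (hg : ContDiff ℝ (⊤:ℕ∞) g) (y : VV n) :
    fderiv ℝ g y (ez n) =
      hDeriv n ⟨n, by omega⟩ (hDeriv n ⟨0, by omega⟩ g) y
       - hDeriv n ⟨0, by omega⟩ (hDeriv n ⟨n, by omega⟩ g) y := by
  have h2 : ContDiff ℝ (⊤:ℕ∞) (fderiv ℝ g) := hg.fderiv_right (by simp)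
  have hd : DifferentiableAt ℝ (fderiv ℝ g) y := (h2.differentiable (by simp)).differentiableAt
  have key : ∀ (j : Fin (2*n)) (v : VV n), fderiv ℝ (hDeriv n j g) y v =
      fderiv ℝ (fderiv ℝ g) y v (Xvec n j y) + lf n j v • fderiv ℝ g y (ez n) := by
    intro j v
    have hX : HasFDerivAt (Xvec n j) ((lf n j).smulRight (ez n)) y := by
      have : Xvec n j = fun x => Pi.single j.castSucc 1 + lf n j x • ez n := by
        funext x; exact Xvec_eq n j x
      rw [this]
      exact ((lf n j).smulRight (ez n)).hasFDerivAt.const_add _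
    have := (hd.hasFDerivAt.clm_apply hX).fderiv
    unfold hDeriv
    rw [this]
    simp [add_comm]
  have hs : IsSymmSndFDerivAt ℝ g y := hg.contDiffAt.isSymmSndFDerivAt (by simp; exact WithTop.coe_le_coe.2 (le_top : (2:ℕ∞) ≤ ⊤))
  rw [hDeriv, hDeriv, key, key, hs.eq (Xvec n ⟨n, by omega⟩ y)]
  have a1 : lf n ⟨0, by omega⟩ (Xvec n ⟨n, by omega⟩ y) = 1 := by
    rw [Xvec_eq, map_add, map_smul, lf_ez]
    unfold lf
    rw [dif_pos (show 0 < n by omega)]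
    simp
  have a2 : lf n ⟨n, by omega⟩ (Xvec n ⟨0, by omega⟩ y) = 0 := by
    unfold lf
    simp
  rw [a1, a2]
  simp

/-- functional used in the affine map -/
def BB (n : ℕ) (x : VV n) : VV n →L[ℝ] ℝ :=
  ∑ j : Fin (2*n), lf n j x • (ContinuousLinearMap.proj j.castSucc : VV n →L[ℝ] ℝ)

theorem BB_apply (n : ℕ) (x y : VV n) : BB n x y = ∑ j : Fin (2*n), lf n j x * y j.castSucc := by
  simp [BB]

def zc (n : ℕ) : VV n →L[ℝ] ℝ := ContinuousLinearMap.proj (Fin.last (2*n))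

def LL (n : ℕ) (x : VV n) (t : ℝ) : VV n →L[ℝ] VV n :=
  t • (ContinuousLinearMap.id ℝ (VV n) + ((t - 1) • zc n + BB n x).smulRight (ez n))

def PH (n : ℕ) (x : VV n) (t : ℝ) (y : VV n) : VV n := x + LL n x t y

theorem LL_apply (n : ℕ) (x : VV n) (t : ℝ) (y : VV n) :
    LL n x t y = t • y + (t * ((t - 1) * zc n y + BB n x y)) • ez n := by
  simp [LL, smul_smul]

theorem lf_PH (n : ℕ) (j) (x : VV n) (t : ℝ) (y : VV n) :
    lf n j (PH n x t y) = lf n j x + t * lf n j y := by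
  simp [PH, LL_apply, lf_ez]

theorem BB_ez (n : ℕ) (x : VV n) : BB n x (ez n) = 0 := by
  rw [BB_apply]
  apply Finset.sum_eq_zero
  intro j _
  simp [ez, (Fin.castSucc_lt_last j).ne]

theorem zc_ez (n : ℕ) : zc n (ez n) = 1 := by simp [zc, ez]

theorem LL_Xvec (n : ℕ) (j) (x : VV n) (t : ℝ) (y : VV n) :
    LL n x t (Xvec n j y) = t • Xvec n j (PH n x t y) := by
  rw [Xvec_eq, Xvec_eq, lf_PH, LL_apply]
  have h1 : zc n (Pi.single j.castSucc 1) = 0 := by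
    simp [zc, (Fin.castSucc_lt_last j).ne']
  have h2 : BB n x (Pi.single j.castSucc 1) = lf n j x := by
    rw [BB_apply, Finset.sum_eq_single j]
    · simp
    · intro b _ hb
      rw [Pi.single_eq_of_ne]; · simp
      simpa using hb
    · simp
  simp only [map_add, map_smul, h1, h2, zc_ez, BB_ez, smul_eq_mul]
  module

theorem sum_single (n : ℕ) (y : VV n) :
    ∑ j : Fin (2*n), y j.castSucc • (Pi.single j.castSucc 1 : VV n) = y - zc n y • ez n := by
  have := Fin.sum_univ_castSucc (fun i : Fin (2*n+1) => y i • (Pi.single i 1 : VV n))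
  rw [eq_sub_iff_add_eq]
  unfold zc ez
  simp only [ContinuousLinearMap.proj_apply]
  rw [← this]
  exact (pi_eq_sum_univ' y).symm ▸ by simp [Pi.single_apply]

def cc (n : ℕ) (y : VV n) : ℝ := 2 * zc n y - BB n y y

theorem PH_deriv_eq (n : ℕ) (x : VV n) (t : ℝ) (y : VV n) :
    y + ((2*t-1) * zc n y + BB n x y) • ez n =
     (∑ j : Fin (2*n), y j.castSucc • Xvec n j (PH n x t y)) + (t * cc n y) • ez n := by
  have : ∑ j : Fin (2*n), y j.castSucc • Xvec n j (PH n x t y)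
    = (y - zc n y • ez n) + (BB n x y + t * BB n y y) • ez n := by
    rw [← sum_single, BB_apply, BB_apply, Finset.mul_sum, ← Finset.sum_add_distrib, Finset.sum_smul,
      ← Finset.sum_add_distrib]
    refine Finset.sum_congr rfl fun j _ => ?_
    rw [Xvec_eq, lf_PH]
    module
  rw [this, cc]
  module

theorem PH_hasDerivAt (n : ℕ) (x : VV n) (t : ℝ) (y : VV n) :
    HasDerivAt (fun t => PH n x t y) (y + ((2*t-1) * zc n y + BB n x y) • ez n) t := by
  have : (fun t => PH n x t y) =
    fun t => x + (t • y + (t * ((t - 1) * zc n y + BB n x y)) • ez n) := by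
    funext t; rw [PH, LL_apply]
  rw [this]
  have h1 : HasDerivAt (fun t : ℝ => t * ((t - 1) * zc n y + BB n x y))
     ((2*t-1) * zc n y + BB n x y) t := by
    have := (hasDerivAt_id t).mul ((((hasDerivAt_id t).sub_const 1).mul_const (zc n y)).add_const (BB n x y))
    refine this.congr_deriv ?_
    simp; ring
  have := (((hasDerivAt_id t).smul_const y).add (h1.smul_const (ez n))).const_add x
  refine this.congr_deriv ?_
  simp

theorem PH_hasFDerivAt (n : ℕ) (x : VV n) (t : ℝ) (y : VV n) :
    HasFDerivAt (PH n x t) (LL n x t) y := (LL n x t).hasFDerivAt.const_add x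

theorem PH_contDiff (n : ℕ) (x : VV n) (t : ℝ) : ContDiff ℝ (⊤:ℕ∞) (PH n x t) :=
  contDiff_const.add (LL n x t).contDiff

theorem PH_cont2 (n : ℕ) (x : VV n) : Continuous (fun p : ℝ × VV n => PH n x p.1 p.2) := by
  simp only [PH, LL_apply]
  fun_prop

theorem LL_det (n : ℕ) (x : VV n) (t : ℝ) : (LL n x t).det = t ^ (2*n+2) := by
  have : ((LL n x t : VV n →L[ℝ] VV n) : VV n →ₗ[ℝ] VV n) = t • LinearMap.transvection
      (((t - 1) • zc n + BB n x : VV n →L[ℝ] ℝ) : VV n →ₗ[ℝ] ℝ) (ez n) := by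
    refine LinearMap.ext fun v => ?_
    simp [LL, LinearMap.transvection.apply]
  rw [ContinuousLinearMap.det, this, LinearMap.det_smul, LinearMap.transvection.det]
  simp [BB_ez, zc_ez]
  ring

theorem hDeriv_comp {n : ℕ} (j) (x : VV n) (t : ℝ) {g : VV n → E} (hg : ContDiff ℝ (⊤:ℕ∞) g)
    (y : VV n) : hDeriv n j (g ∘ PH n x t) y = t • hDeriv n j g (PH n x t y) := by
  have hd : DifferentiableAt ℝ g (PH n x t y) := (hg.differentiable (by simp)).differentiableAt
  have := (hd.hasFDerivAt.comp y (PH_hasFDerivAt n x t y)).fderiv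
  rw [hDeriv, this, hDeriv, ContinuousLinearMap.comp_apply, LL_Xvec, map_smul]

theorem hDeriv_eq {n : ℕ} (j) (u : VV n → E) (y : VV n) : hDeriv n j u y =
    fderiv ℝ u y (Pi.single j.castSucc 1) + lf n j y • fderiv ℝ u y (ez n) := by
  rw [hDeriv, Xvec_eq, map_add, map_smul]

theorem ibp_v {n : ℕ} {ψ : VV n → ℝ} {u : VV n → E} (hψ : ContDiff ℝ (⊤:ℕ∞) ψ)
    (hc : HasCompactSupport ψ) (hu : ContDiff ℝ (⊤:ℕ∞) u) (v : VV n) :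
    ∫ y, ψ y • fderiv ℝ u y v = - ∫ y, fderiv ℝ ψ y v • u y := by
  have c1 : Continuous (fderiv ℝ ψ) := hψ.continuous_fderiv (by simp)
  have c2 : Continuous (fderiv ℝ u) := hu.continuous_fderiv (by simp)
  have c3 := hψ.continuous
  have c4 := hu.continuous
  apply integral_smul_fderiv_eq_neg_fderiv_smul_of_integrable
  · apply Continuous.integrable_of_hasCompactSupport (by fun_prop)
    exact (hc.fderiv_apply (𝕜 := ℝ) v).smul_right
  · apply Continuous.integrable_of_hasCompactSupport (by fun_prop)
    exact hc.smul_right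
  · apply Continuous.integrable_of_hasCompactSupport (by fun_prop)
    exact hc.smul_right
  · intro x _; exact (hψ.differentiable (by simp)).differentiableAt
  · intro x _; exact (hu.differentiable (by simp)).differentiableAt

theorem ibp_X {n : ℕ} {ψ : VV n → ℝ} {u : VV n → E} (hψ : ContDiff ℝ (⊤:ℕ∞) ψ)
    (hc : HasCompactSupport ψ) (hu : ContDiff ℝ (⊤:ℕ∞) u) (j : Fin (2*n)) :
    ∫ y, ψ y • hDeriv n j u y = - ∫ y, hDeriv n j ψ y • u y := by
  have c1 : Continuous (fderiv ℝ ψ) := hψ.continuous_fderiv (by simp)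
  have c2 : Continuous (fderiv ℝ u) := hu.continuous_fderiv (by simp)
  have c3 := hψ.continuous
  have c4 := hu.continuous
  have hψ' : ContDiff ℝ (⊤:ℕ∞) (fun y => lf n j y * ψ y) := (lf n j).contDiff.mul hψ
  have hc' : HasCompactSupport (fun y => lf n j y * ψ y) := hc.mul_left
  have e1 := ibp_v hψ hc hu (Pi.single j.castSucc 1)
  have e2 := ibp_v hψ' hc' hu (ez n)
  have hf : ∀ y, fderiv ℝ (fun y => lf n j y * ψ y) y (ez n) = lf n j y * fderiv ℝ ψ y (ez n) := by
    intro y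
    have hd : DifferentiableAt ℝ ψ y := (hψ.differentiable (by simp)).differentiableAt
    have := ((lf n j).hasFDerivAt (x := y)).mul hd.hasFDerivAt
    have e : fderiv ℝ (fun y => lf n j y * ψ y) y = _ := this.fderiv
    rw [e]
    simp [lf_ez]
  simp only [hf] at e2
  have i1 : Integrable (fun y => ψ y • fderiv ℝ u y (Pi.single j.castSucc 1)) :=
    Continuous.integrable_of_hasCompactSupport (by fun_prop) hc.smul_right
  have i2 : Integrable (fun y => (lf n j y * ψ y) • fderiv ℝ u y (ez n)) :=
    Continuous.integrable_of_hasCompactSupport (by fun_prop) hc'.smul_right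
  have i3 : Integrable (fun y => fderiv ℝ ψ y (Pi.single j.castSucc 1) • u y) :=
    Continuous.integrable_of_hasCompactSupport (by fun_prop)
      (hc.fderiv_apply (𝕜 := ℝ) _).smul_right
  have i4 : Integrable (fun y => (lf n j y * fderiv ℝ ψ y (ez n)) • u y) :=
    Continuous.integrable_of_hasCompactSupport (by fun_prop)
      (HasCompactSupport.smul_right (hc.fderiv_apply (𝕜 := ℝ) _).mul_left)
  calc ∫ y, ψ y • hDeriv n j u y
      = ∫ y, (ψ y • fderiv ℝ u y (Pi.single j.castSucc 1)
         + (lf n j y * ψ y) • fderiv ℝ u y (ez n)) := by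
        refine integral_congr_ae (Eventually.of_forall fun y => ?_)
        simp only [hDeriv_eq]; module
    _ = - ∫ y, (fderiv ℝ ψ y (Pi.single j.castSucc 1) • u y
         + (lf n j y * fderiv ℝ ψ y (ez n)) • u y) := by
        rw [integral_add i1 i2, integral_add i3 i4, e1, e2]; abel
    _ = _ := by
        congr 1
        refine integral_congr_ae (Eventually.of_forall fun y => ?_)
        simp only [hDeriv_eq, smul_eq_mul]; module

/-- admissible test functions -/
def Adm (n : ℕ) (φ : VV n → ℝ) : Prop :=
  ContDiff ℝ (⊤:ℕ∞) φ ∧ ∀ y ∉ closedBall (0 : VV n) 1, φ y = 0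

theorem Adm.hcs {n : ℕ} {φ : VV n → ℝ} (h : Adm n φ) : HasCompactSupport φ :=
  HasCompactSupport.intro (isCompact_closedBall (0 : VV n) 1) h.2

theorem Adm.hD {n : ℕ} {φ : VV n → ℝ} (h : Adm n φ) (j) : Adm n (hDeriv n j φ) := by
  refine ⟨contDiff_hDeriv h.1, fun y hy => ?_⟩
  have : φ =ᶠ[𝓝 y] fun _ => (0:ℝ) := by
    filter_upwards [isClosed_closedBall.isOpen_compl.mem_nhds hy] with z hz using h.2 z hz
  rw [hDeriv, this.fderiv_eq]
  simp

theorem Adm.mulL {n : ℕ} {φ a : VV n → ℝ} (h : Adm n φ) (ha : ContDiff ℝ (⊤:ℕ∞) a) :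
    Adm n (fun y => a y * φ y) :=
  ⟨ha.mul h.1, fun y hy => by simp only [h.2 y hy, mul_zero]⟩

theorem contDiff_cc (n : ℕ) : ContDiff ℝ (⊤:ℕ∞) (cc n) := by
  have : cc n = fun y => 2 * zc n y - ∑ j : Fin (2*n), lf n j y * y j.castSucc := by
    funext y; rw [cc, BB_apply]
  rw [this]
  refine (contDiff_const.mul (zc n).contDiff).sub (ContDiff.sum fun j _ => ?_)
  exact (lf n j).contDiff.mul (contDiff_apply ℝ ℝ _)

def DD (n : ℕ) (hn : 1 ≤ n) (j : Fin (2*n)) (φ : VV n → ℝ) (y : VV n) : ℝ :=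
  y j.castSucc * φ y
   + (if j = ⟨n, by omega⟩ then hDeriv n ⟨0, by omega⟩ (fun y => cc n y * φ y) y else 0)
   - (if j = ⟨0, by omega⟩ then hDeriv n ⟨n, by omega⟩ (fun y => cc n y * φ y) y else 0)

theorem Adm.DD {n : ℕ} (hn : 1 ≤ n) {φ : VV n → ℝ} (h : Adm n φ) (j) : Adm n (DD n hn j φ) := by
  have a1 : Adm n (fun y => y j.castSucc * φ y) := h.mulL (contDiff_apply ℝ ℝ _)
  have a2 := h.mulL (contDiff_cc n)
  have a3 := a2.hD ⟨0, by omega⟩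
  have a4 := a2.hD ⟨n, by omega⟩
  unfold _root_.DD
  constructor
  · refine (a1.1.add ?_).sub ?_
    · split_ifs
      · exact a3.1
      · exact contDiff_const
    · split_ifs
      · exact a4.1
      · exact contDiff_const
  · intro y hy
    simp only [a3.2 y hy, a4.2 y hy, h.2 y hy]
    simp

def AA {n : ℕ} (φ : VV n → ℝ) (g : VV n → E) (x : VV n) (t : ℝ) : E :=
  ∫ y, φ y • g (PH n x t y)

theorem Adm.int {n : ℕ} {φ : VV n → ℝ} (h : Adm n φ) {u : VV n → E} (hu : Continuous u) :
    Integrable (fun y => φ y • u y) :=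
  Continuous.integrable_of_hasCompactSupport (h.1.continuous.smul hu) h.hcs.smul_right

theorem AA_DD {n : ℕ} (hn : 1 ≤ n) {φ : VV n → ℝ} (h : Adm n φ) (j) {g : VV n → E}
    (hg : ContDiff ℝ (⊤:ℕ∞) g) (x : VV n) (t : ℝ) :
    AA (DD n hn j φ) g x t = AA (fun y => y j.castSucc * φ y) g x t
     + (if j = ⟨n, by omega⟩ then AA (hDeriv n ⟨0, by omega⟩ (fun y => cc n y * φ y)) g x t else 0)
     - (if j = ⟨0, by omega⟩ then AA (hDeriv n ⟨n, by omega⟩ (fun y => cc n y * φ y)) g x t else 0) := by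
  have a1 : Adm n (fun y => y j.castSucc * φ y) := h.mulL (contDiff_apply ℝ ℝ _)
  have a2 := h.mulL (contDiff_cc n)
  have a3 := a2.hD ⟨0, by omega⟩
  have a4 := a2.hD ⟨n, by omega⟩
  have hu : Continuous (fun y => g (PH n x t y)) := hg.continuous.comp (PH_contDiff n x t).continuous
  have i1 := a1.int hu
  have i3 := a3.int hu
  have i4 := a4.int hu
  unfold AA DD
  split_ifs with h1 h2 h2
  · exfalso
    rw [h1] at h2
    have := congrArg Fin.val h2
    simp at this
    omega
  · simp only [add_smul, sub_zero]
    rw [integral_add i1 i3]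
  · simp only [sub_smul, add_zero]
    rw [integral_sub i1 i4]
  · simp only [add_zero, sub_zero]

theorem AA_ibp {n : ℕ} {φ : VV n → ℝ} (h : Adm n φ) (j) {g : VV n → E}
    (hg : ContDiff ℝ (⊤:ℕ∞) g) (x : VV n) (t : ℝ) :
    t • AA φ (hDeriv n j g) x t = - AA (hDeriv n j φ) g x t := by
  have := ibp_X h.1 h.hcs (hg.comp (PH_contDiff n x t)) j
  simp only [hDeriv_comp j x t hg] at this
  unfold AA
  rw [← integral_smul]
  simp only [Function.comp] at this
  rw [← this]
  refine integral_congr_ae (Eventually.of_forall fun y => ?_)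
  simp only
  rw [smul_comm]

theorem AA_hasDerivAt0 {n : ℕ} {φ : VV n → ℝ} (h : Adm n φ) {g : VV n → E}
    (hg : ContDiff ℝ (⊤:ℕ∞) g) (x : VV n) (t : ℝ) :
    HasDerivAt (AA φ g x)
      (∫ y, φ y • fderiv ℝ g (PH n x t y) (y + ((2*t-1) * zc n y + BB n x y) • ez n)) t := by
  have c1 : Continuous (fderiv ℝ g) := hg.continuous_fderiv (by simp)
  have c0 := hg.continuous
  have cφ := h.1.continuous
  have cP := PH_cont2 n x
  have cP' : ∀ t, Continuous (PH n x t) := fun t => (PH_contDiff n x t).continuous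
  have cF : Continuous (fun p : ℝ × VV n =>
      φ p.2 • fderiv ℝ g (PH n x p.1 p.2) (p.2 + ((2*p.1-1) * zc n p.2 + BB n x p.2) • ez n)) := by
    apply (cφ.comp continuous_snd).smul
    exact (c1.comp cP).clm_apply (by fun_prop)
  obtain ⟨C, hC⟩ := ((isCompact_closedBall t 1).prod (isCompact_closedBall (0 : VV n) 1)).exists_bound_of_continuousOn cF.continuousOn
  refine (hasDerivAt_integral_of_dominated_loc_of_deriv_le (s := closedBall t 1)
    (bound := (closedBall (0 : VV n) 1).indicator (fun _ => C))
    (F := fun t y => φ y • g (PH n x t y)) (F' := fun t y =>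
      φ y • fderiv ℝ g (PH n x t y) (y + ((2*t-1) * zc n y + BB n x y) • ez n))
    (closedBall_mem_nhds t one_pos) ?_ ?_ ?_ ?_ ?_ ?_).2
  · exact Eventually.of_forall fun s => (h.int (c0.comp (cP' s))).aestronglyMeasurable
  · exact h.int (c0.comp (cP' t))
  · exact (cF.comp (Continuous.prodMk_right t)).aestronglyMeasurable
  · refine Eventually.of_forall fun y s hs => ?_
    by_cases hy : y ∈ closedBall (0 : VV n) 1
    · rw [indicator_of_mem hy]
      exact hC (s, y) ⟨hs, hy⟩
    · rw [indicator_of_notMem hy, h.2 y hy]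
      simp
  · rw [integrable_indicator_iff measurableSet_closedBall]
    exact integrableOn_const (isCompact_closedBall (0 : VV n) 1).measure_lt_top.ne
  · refine Eventually.of_forall fun y s hs => ?_
    have hd : DifferentiableAt ℝ g (PH n x s y) := (hg.differentiable (by simp)).differentiableAt
    exact (hd.hasFDerivAt.comp_hasDerivAt s (PH_hasDerivAt n x s y)).const_smul (φ y)

theorem AA_hasDerivAt {n : ℕ} (hn : 1 ≤ n) {φ : VV n → ℝ} (h : Adm n φ) {g : VV n → E}
    (hg : ContDiff ℝ (⊤:ℕ∞) g) (x : VV n) (t : ℝ) :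
    HasDerivAt (AA φ g x) (∑ j, AA (DD n hn j φ) (hDeriv n j g) x t) t := by
  convert AA_hasDerivAt0 h hg x t using 1
  have cP : Continuous (PH n x t) := (PH_contDiff n x t).continuous
  have a2 := h.mulL (contDiff_cc n)
  have cD : ∀ j, Continuous (fun y => hDeriv n j g (PH n x t y)) :=
    fun j => (contDiff_hDeriv hg).continuous.comp cP
  have cDD : ∀ i j, Continuous (fun y => hDeriv n i (hDeriv n j g) (PH n x t y)) :=
    fun i j => (contDiff_hDeriv (contDiff_hDeriv hg)).continuous.comp cP
  simp only [AA_DD hn h _ (contDiff_hDeriv hg), Finset.sum_sub_distrib, Finset.sum_add_distrib,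
    Finset.sum_ite_eq', Finset.mem_univ, if_true]
  have e1 := AA_ibp a2 ⟨0, by omega⟩ (contDiff_hDeriv (j := ⟨n, by omega⟩) hg) x t
  have e2 := AA_ibp a2 ⟨n, by omega⟩ (contDiff_hDeriv (j := ⟨0, by omega⟩) hg) x t
  rw [← neg_eq_iff_eq_neg] at e1 e2
  rw [← e1, ← e2]
  have i1 : ∀ j : Fin (2*n), Integrable (fun y => (y j.castSucc * φ y) • hDeriv n j g (PH n x t y)) :=
    fun j => (h.mulL (contDiff_apply ℝ ℝ _)).int (cD j)
  have i2 : Integrable (fun y => t • ((cc n y * φ y) •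
      hDeriv n ⟨n, by omega⟩ (hDeriv n ⟨0, by omega⟩ g) (PH n x t y))) :=
    (a2.int (cDD ⟨n, by omega⟩ ⟨0, by omega⟩)).smul t
  have i3 : Integrable (fun y => t • ((cc n y * φ y) •
      hDeriv n ⟨0, by omega⟩ (hDeriv n ⟨n, by omega⟩ g) (PH n x t y))) :=
    (a2.int (cDD ⟨0, by omega⟩ ⟨n, by omega⟩)).smul t
  have iS : Integrable (fun y => ∑ j : Fin (2*n), (y j.castSucc * φ y) • hDeriv n j g (PH n x t y)) :=
    integrable_finsetSum _ (fun j _ => i1 j)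
  have iS3 : Integrable (fun y => (∑ j : Fin (2*n), (y j.castSucc * φ y) • hDeriv n j g (PH n x t y))
      - t • ((cc n y * φ y) •
      hDeriv n ⟨0, by omega⟩ (hDeriv n ⟨n, by omega⟩ g) (PH n x t y))) := iS.sub i3
  unfold AA
  rw [← integral_finsetSum _ (fun j _ => i1 j), ← integral_smul, ← integral_smul,
    ← sub_eq_add_neg, sub_neg_eq_add, ← integral_sub iS i3, ← integral_add iS3 i2]
  refine integral_congr_ae (Eventually.of_forall fun y => ?_)
  simp only
  rw [PH_deriv_eq, map_add, map_sum, map_smul, hDeriv_comm hn hg]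
  simp only [map_smul, smul_add, Finset.smul_sum, smul_sub, smul_smul]
  have : ∀ j : Fin (2*n), (φ y * y j.castSucc) • fderiv ℝ g (PH n x t y) (Xvec n j (PH n x t y))
     = (y j.castSucc * φ y) • hDeriv n j g (PH n x t y) := by
    intro j; rw [mul_comm, hDeriv]
  simp only [this]
  module

def GG (n : ℕ) (hn : 1 ≤ n) : ℕ → (VV n → ℝ) → (VV n → E) → VV n → ℝ → E
  | 0, φ, g, x, t => AA φ g x t
  | i+1, φ, g, x, t => ∑ j, GG n hn i (DD n hn j φ) (hDeriv n j g) x t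

theorem GG_hasDerivAt {n : ℕ} (hn : 1 ≤ n) (i : ℕ) {φ : VV n → ℝ} (h : Adm n φ) {g : VV n → E}
    (hg : ContDiff ℝ (⊤:ℕ∞) g) (x : VV n) (t : ℝ) :
    HasDerivAt (GG n hn i φ g x) (GG n hn (i+1) φ g x t) t := by
  induction i generalizing φ g with
  | zero => exact AA_hasDerivAt hn h hg x t
  | succ i ih =>
    have := HasDerivAt.fun_sum (u := Finset.univ) (fun j _ => ih (h.DD hn j) (contDiff_hDeriv (j := j) hg))
    exact this

theorem PH_inj (n : ℕ) (x : VV n) {t : ℝ} (ht : 0 < t) : Function.Injective (PH n x t) := by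
  intro y y' hyy
  have h1 : LL n x t y = LL n x t y' := add_left_cancel hyy
  have hdet : LinearMap.det ((LL n x t : VV n →L[ℝ] VV n) : VV n →ₗ[ℝ] VV n) ≠ 0 := by
    have := LL_det n x t
    rw [ContinuousLinearMap.det] at this
    rw [this]; positivity
  exact (LinearMap.equivOfDetNeZero _ hdet).injective h1

theorem AA_bound {n : ℕ} {φ : VV n → ℝ} (h : Adm n φ) {g : VV n → E}
    (hg : ContDiff ℝ (⊤:ℕ∞) g) (x : VV n) {t M : ℝ} (ht : 0 < t) (hM : 0 < M) {U : Set (VV n)}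
    (hU : IsCompact U) (hPU : ∀ y ∈ closedBall (0 : VV n) 1, PH n x t y ∈ U)
    (hI : ∫ y in U, ‖g y‖^2 ≤ M^2) :
    ‖AA φ g x t‖ ≤ ((∫ y in closedBall (0 : VV n) 1, φ y ^ 2) + 1) / 2 * (M / t^(n+1)) := by
  set K := closedBall (0 : VV n) 1
  have hK : IsCompact K := isCompact_closedBall _ _
  have cg : Continuous (fun y => g (PH n x t y)) := hg.continuous.comp (PH_contDiff n x t).continuous
  have cv := integral_image_eq_integral_abs_det_fderiv_smul volume (s := K) hK.measurableSet
    (fun y _ => (PH_hasFDerivAt n x t y).hasFDerivWithinAt) (PH_inj n x ht).injOn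
    (fun y => ‖g y‖^2)
  have hsub : PH n x t '' K ⊆ U := by rintro _ ⟨y, hy, rfl⟩; exact hPU y hy
  have h1 : ∫ y in PH n x t '' K, ‖g y‖^2 ≤ M^2 := by
    refine le_trans (setIntegral_mono_set ?_ ?_ ?_) hI
    · exact ((hg.continuous.norm.pow 2).continuousOn).integrableOn_compact hU
    · exact Eventually.of_forall fun y => by positivity
    · exact hsub.eventuallyLE
  rw [cv, LL_det] at h1
  simp only [smul_eq_mul] at h1
  rw [integral_const_mul, abs_of_pos (by positivity)] at h1
  set τ := t^(n+1) with hτ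
  have hτ0 : 0 < τ := by positivity
  have h2 : t^(2*n+2) = τ^2 := by rw [hτ]; ring
  rw [h2] at h1
  set W := ∫ y in K, ‖g (PH n x t y)‖^2 with hW
  have hcφ : IntegrableOn (fun y => φ y ^ 2) K := ((h.1.continuous.pow 2).continuousOn).integrableOn_compact hK
  have hcg : IntegrableOn (fun y => ‖g (PH n x t y)‖^2) K :=
    ((cg.norm.pow 2).continuousOn).integrableOn_compact hK
  have e1 : AA φ g x t = ∫ y in K, φ y • g (PH n x t y) := by
    rw [AA, setIntegral_eq_integral_of_forall_compl_eq_zero]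
    intro y hy; rw [h.2 y hy, zero_smul]
  rw [e1]
  have hb : ∀ y, ‖φ y • g (PH n x t y)‖ ≤ (M/τ/2) * φ y ^ 2 + (τ/M/2) * ‖g (PH n x t y)‖^2 := by
    intro y
    rw [norm_smul, Real.norm_eq_abs]
    set a := |φ y|
    have ha : φ y ^ 2 = a^2 := (sq_abs _).symm
    rw [ha]
    set b := ‖g (PH n x t y)‖
    have : (M/τ/2) * a ^ 2 + (τ/M/2) * b^2 - a * b = (M/τ/2) * (a - τ/M*b)^2 := by
      field_simp; ring
    have h0 : 0 ≤ (M/τ/2) * (a - τ/M*b)^2 := by positivity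
    linarith
  have h3 : W ≤ M^2/τ^2 := by rw [le_div_iff₀ (by positivity)]; linarith
  calc ‖∫ y in K, φ y • g (PH n x t y)‖ ≤ ∫ y in K, ‖φ y • g (PH n x t y)‖ := norm_integral_le_integral_norm _
    _ ≤ ∫ y in K, ((M/τ/2) * φ y ^ 2 + (τ/M/2) * ‖g (PH n x t y)‖^2) := by
        refine integral_mono ?_ ((hcφ.const_mul _).add (hcg.const_mul _)) hb
        exact ((h.int cg).integrableOn).norm
    _ = (M/τ/2) * (∫ y in K, φ y ^ 2) + (τ/M/2) * W := by
        rw [integral_add (hcφ.const_mul _) (hcg.const_mul _), integral_const_mul, integral_const_mul]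
    _ ≤ (M/τ/2) * (∫ y in K, φ y ^ 2) + (τ/M/2) * (M^2/τ^2) := by gcongr
    _ = _ := by field_simp

theorem GG_bound {n : ℕ} (hn : 1 ≤ n) (i : ℕ) {φ : VV n → ℝ} (h : Adm n φ) :
    ∃ C : ℝ, 0 ≤ C ∧ ∀ (g : VV n → E), ContDiff ℝ (⊤:ℕ∞) g → ∀ (x : VV n) (t M : ℝ), 0 < t → 0 < M →
    ∀ U : Set (VV n), IsCompact U → (∀ y ∈ closedBall (0 : VV n) 1, PH n x t y ∈ U) →
    (∀ J : List (Fin (2*n)), J.length = i → ∫ y in U, ‖XI n J g y‖^2 ≤ M^2) →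
    ‖GG n hn i φ g x t‖ ≤ C * (M / t^(n+1)) := by
  induction i generalizing φ with
  | zero =>
    refine ⟨((∫ y in closedBall (0 : VV n) 1, φ y ^ 2) + 1) / 2, ?_, ?_⟩
    · have : 0 ≤ ∫ y in closedBall (0 : VV n) 1, φ y ^ 2 := integral_nonneg fun y => sq_nonneg _
      positivity
    · intro g hg x t M ht hM U hU hPU hI
      exact AA_bound h hg x ht hM hU hPU (hI [] rfl)
  | succ i ih =>
    choose C hC0 hC using fun j => ih (h.DD hn j)
    refine ⟨∑ j, C j, Finset.sum_nonneg fun j _ => hC0 j, ?_⟩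
    intro g hg x t M ht hM U hU hPU hI
    rw [Finset.sum_mul]
    refine (norm_sum_le _ _).trans (Finset.sum_le_sum fun j _ => ?_)
    refine hC j _ (contDiff_hDeriv hg) x t M ht hM U hU hPU ?_
    intro J hJ
    have : XI n J (hDeriv n j g) = XI n (J ++ [j]) g := XI_append J [j] g
    rw [this]
    exact hI _ (by simp [hJ])

theorem taylor_aux {h : ℕ → ℝ → E} (hh : ∀ i t, HasDerivAt (h i) (h (i+1) t) t) (s : ℕ) (t : ℝ) :
    HasDerivAt (fun t => ∑ i ∈ Finset.range (s+1), ((-t)^i / (i.factorial : ℝ)) • h i t)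
      (((-t)^s / (s.factorial : ℝ)) • h (s+1) t) t := by
  induction s with
  | zero => simpa using hh 0 t
  | succ s ih =>
    simp_rw [Finset.sum_range_succ _ (s+1)]
    have hp : HasDerivAt (fun t : ℝ => (-t)^(s+1) / ((s+1).factorial : ℝ))
        (-((-t)^s / (s.factorial : ℝ))) t := by
      have := (((hasDerivAt_id t).neg).pow (s+1)).div_const ((s+1).factorial : ℝ)
      refine this.congr_deriv ?_
      have : (s.factorial : ℝ) ≠ 0 := by positivity
      simp [Nat.factorial_succ]
      field_simp
    refine (ih.add (hp.smul (hh (s+1) t))).congr_deriv ?_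
    module

theorem core [CompleteSpace E] {n : ℕ} (hn : 1 ≤ n) {r : ℝ} (hr : 0 < r) :
    ∃ C : ℝ, 0 ≤ C ∧ ∀ (g : VV n → E), ContDiff ℝ (⊤:ℕ∞) g → ∀ (x : VV n) (M : ℝ), 0 < M →
    ∀ U : Set (VV n), IsCompact U →
    (∀ t, 0 < t → t ≤ r → ∀ y ∈ closedBall (0 : VV n) 1, PH n x t y ∈ U) →
    (∀ J : List (Fin (2*n)), J.length ≤ n + 2 → ∫ y in U, ‖XI n J g y‖^2 ≤ M^2) →
    ‖g x‖ ≤ C * M := by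
  let b : ContDiffBump (0 : VV n) := ⟨1/2, 1, by norm_num, by norm_num⟩
  let φ : VV n → ℝ := b.normed volume
  have hφ : Adm n φ := by
    refine ⟨b.contDiff_normed, fun y hy => ?_⟩
    by_contra hne
    have : y ∈ Function.support (b.normed volume) := hne
    rw [b.support_normed_eq] at this
    exact hy (ball_subset_closedBall this)
  choose C hC0 hC using fun i => GG_bound (E := E) hn i hφ
  refine ⟨C (n+2) * r + ∑ i ∈ Finset.range (n+2), (r^i / (i.factorial : ℝ)) * (C i / r^(n+1)),
    ?_, ?_⟩
  · have := hC0 (n+2)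
    have : ∀ i, 0 ≤ C i := hC0
    exact add_nonneg (by positivity) (Finset.sum_nonneg fun i _ => by have := hC0 i; positivity)
  intro g hg x M hM U hU hPU hI
  have hder := fun t => taylor_aux (fun i t => GG_hasDerivAt hn i hφ hg x t) (n+1) t
  set H := fun t : ℝ => ∑ i ∈ Finset.range (n+1+1), ((-t)^i / (i.factorial : ℝ)) • GG n hn i φ g x t
    with hH
  have hH0 : H 0 = g x := by
    rw [hH]
    simp only
    rw [Finset.sum_range_succ']
    have : ∀ y, PH n x 0 y = x := by intro y; simp [PH, LL]
    simp [GG, AA, this]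
    rw [integral_smul_const, b.integral_normed, one_smul]
  have hHr : ‖H r‖ ≤ (∑ i ∈ Finset.range (n+2), (r^i / (i.factorial : ℝ)) * (C i / r^(n+1))) * M := by
    rw [hH, Finset.sum_mul]
    refine (norm_sum_le _ _).trans (Finset.sum_le_sum fun i hi => ?_)
    have hi' : i < n + 2 := Finset.mem_range.1 hi
    have := hC i g hg x r M hr hM U hU (hPU r hr le_rfl) (fun J hJ => hI J (by omega))
    rw [norm_smul]
    have e : ‖(-r)^i / (i.factorial : ℝ)‖ = r^i / (i.factorial : ℝ) := by
      simp [abs_of_pos hr]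
    rw [e]
    calc r^i / (i.factorial : ℝ) * ‖GG n hn i φ g x r‖
        ≤ r^i / (i.factorial : ℝ) * (C i * (M / r^(n+1))) := by gcongr
      _ = _ := by ring
  have hmv : ‖H r - H 0‖ ≤ C (n+2) * M * (r - 0) := by
    refine norm_image_sub_le_of_norm_deriv_le_segment' (fun t _ => (hder t).hasDerivWithinAt) ?_ r
      ⟨hr.le, le_rfl⟩
    intro t ht
    rw [norm_smul]
    rcases ht.1.eq_or_lt with h0 | h0
    · rw [← h0]; simp
      exact mul_nonneg (hC0 _) hM.le
    · have := hC (n+2) g hg x t M h0 hM U hU (hPU t h0 ht.2.le) (fun J hJ => hI J (by omega))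
      have e : ‖(-t)^(n+1) / ((n+1).factorial : ℝ)‖ ≤ t^(n+1) := by
        simp only [norm_div, norm_pow, norm_neg, Real.norm_eq_abs, abs_of_pos h0, Nat.abs_cast]
        apply div_le_self (by positivity)
        exact_mod_cast Nat.succ_le_of_lt (Nat.factorial_pos _)
      calc ‖(-t)^(n+1) / ((n+1).factorial : ℝ)‖ * ‖GG n hn (n+1+1) φ g x t‖
          ≤ t^(n+1) * (C (n+2) * (M / t^(n+1))) := by gcongr
        _ = _ := by field_simp
  rw [← hH0]
  have : ‖H 0‖ ≤ ‖H r‖ + ‖H r - H 0‖ := by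
    have := norm_sub_norm_le (H 0) (H r)
    rw [norm_sub_rev] at this
    linarith
  rw [sub_zero] at hmv
  nlinarith

def RR {n : ℕ} (D : Set (VV n)) (x : VV n) (N : ℕ) (g : VV n → E) : Prop :=
  ∃ h : VV n → E, ContDiffWithinAt ℝ N h (closure D) x ∧ ∀ᶠ y in 𝓝[D] x, h y = g y

theorem RR_step {n : ℕ} {D : Set (VV n)} (hD : IsOpen D) {x : VV n} (hx : x ∈ closure D) {N : ℕ}
    {g : VV n → E} (hg : RR D x (N+1) g) (j) : RR D x N (hDeriv n j g) := by
  obtain ⟨h, hh, heq⟩ := hg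
  rw [show ((N+1 : ℕ) : WithTop ℕ∞) = (N : WithTop ℕ∞) + 1 by push_cast; rfl] at hh
  rw [contDiffWithinAt_succ_iff_hasFDerivWithinAt (by simp)] at hh
  obtain ⟨u, hu, -, f', hf', hcf⟩ := hh
  rw [insert_eq_of_mem hx] at hu
  refine ⟨fun y => f' y (Xvec n j y), ?_, ?_⟩
  · refine ContDiffWithinAt.clm_apply (hcf.mono_of_mem_nhdsWithin hu) ?_
    exact ((contDiff_Xvec n j).of_le (by exact_mod_cast le_top)).contDiffWithinAt
  · have hu' : u ∈ 𝓝[D] x := nhdsWithin_mono x subset_closure hu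
    have h1 : ∀ᶠ y in 𝓝[D] x, ∀ᶠ z in 𝓝[D] y, z ∈ u := eventually_eventually_nhdsWithin.2 hu'
    have h2 := eventually_eventually_nhdsWithin.2 heq
    filter_upwards [h1, h2, self_mem_nhdsWithin, hu'] with y hy1 hy2 hyD hyu
    rw [hD.nhdsWithin_eq hyD] at hy1 hy2
    have e1 : HasFDerivAt h (f' y) y := (hf' y hyu).hasFDerivAt hy1
    have e2 : fderiv ℝ g y = f' y := by
      rw [← e1.fderiv]; exact (EventuallyEq.fderiv_eq hy2).symm
    rw [hDeriv, e2]

theorem RR_XI {n : ℕ} {D : Set (VV n)} (hD : IsOpen D) {x : VV n} (hx : x ∈ closure D)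
    {f : VV n → E} (hf : ContDiffWithinAt ℝ (⊤:ℕ∞) f (closure D) x) (J : List (Fin (2*n))) (N : ℕ) :
    RR D x N (XI n J f) := by
  induction J generalizing N with
  | nil => exact ⟨f, hf.of_le (by exact_mod_cast le_top), Eventually.of_forall fun _ => rfl⟩
  | cons j J ih => exact RR_step hD hx (ih (N+1)) j

theorem XI_intOn {n : ℕ} {D : Set (VV n)} (hD : IsOpen D) (hDb : IsBounded D)
    {f : VV n → E} (hf : ContDiffOn ℝ (⊤:ℕ∞) f (closure D)) (J : List (Fin (2*n))) :
    IntegrableOn (fun y => ‖XI n J f y‖^2) D := by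
  have hb : ∃ C, ∀ y ∈ closure D ∩ D, ‖XI n J f y‖^2 ≤ C := by
    refine hDb.isCompact_closure.induction_on (p := fun s => ∃ C, ∀ y ∈ s ∩ D, ‖XI n J f y‖^2 ≤ C)
      ⟨0, by simp⟩ ?_ ?_ ?_
    · rintro s t hst ⟨C, hC⟩
      exact ⟨C, fun y hy => hC y ⟨hst hy.1, hy.2⟩⟩
    · rintro s t ⟨C, hC⟩ ⟨C', hC'⟩
      refine ⟨max C C', ?_⟩
      rintro y ⟨hy | hy, hyD⟩
      · exact (hC y ⟨hy, hyD⟩).trans (le_max_left _ _)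
      · exact (hC' y ⟨hy, hyD⟩).trans (le_max_right _ _)
    · intro x hx
      obtain ⟨h, hh, heq⟩ := RR_XI hD hx (hf x hx) J 0
      have hc : ContinuousWithinAt (fun y => ‖h y‖^2) (closure D) x := hh.continuousWithinAt.norm.pow 2
      have h1 : ∀ᶠ y in 𝓝[D] x, ‖h y‖^2 < ‖h x‖^2 + 1 :=
        (hc.mono subset_closure).eventually (gt_mem_nhds (by linarith))
      have h2 : ∀ᶠ y in 𝓝[D] x, ‖XI n J f y‖^2 ≤ ‖h x‖^2 + 1 := by
        filter_upwards [h1, heq] with y hy1 hy2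
        rw [← hy2]; exact hy1.le
      rw [eventually_nhdsWithin_iff] at h2
      exact ⟨_, mem_nhdsWithin_of_mem_nhds h2, ‖h x‖^2 + 1, fun y hy => hy.1 hy.2⟩
  obtain ⟨C, hC⟩ := hb
  have hcont : ContinuousOn (fun y => ‖XI n J f y‖^2) D := by
    intro x hx
    obtain ⟨h, hh, heq⟩ := RR_XI hD (subset_closure hx) (hf x (subset_closure hx)) J 0
    have hc : ContinuousWithinAt h D x := hh.continuousWithinAt.mono subset_closure
    have hq : XI n J f =ᶠ[𝓝[D] x] h := heq.mono fun y hy => hy.symm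
    have := hc.congr_of_eventuallyEq hq (hq.self_of_nhdsWithin hx)
    exact this.norm.pow 2
  refine IntegrableOn.of_bound hDb.measure_lt_top
    (hcont.aestronglyMeasurable hD.measurableSet) C ?_
  · refine ae_restrict_of_forall_mem hD.measurableSet fun y hy => ?_
    rw [Real.norm_of_nonneg (by positivity)]
    exact hC y ⟨subset_closure hy, hy⟩

theorem XI_congr {n : ℕ} {f g : VV n → E} {y : VV n} (h : f =ᶠ[𝓝 y] g) (J : List (Fin (2*n))) :
    XI n J f =ᶠ[𝓝 y] XI n J g := by
  induction J with
  | nil => exact h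
  | cons j J ih =>
    have := ih.fderiv (𝕜 := ℝ)
    filter_upwards [this] with z hz
    simp only [XI, hDeriv, hz]

theorem le_fsNormSq {n : ℕ} {D : Set (VV n)} {s : ℕ} (f : VV n → E) (J : List (Fin (2*n)))
    (hJ : J.length ≤ s) : ∫ x in D, ‖XI n J f x‖^2 ≤ fsNormSq n D s f := by
  unfold fsNormSq
  have h0 : ∀ J : List (Fin (2*n)), 0 ≤ ∫ x in D, ‖XI n J f x‖^2 :=
    fun J => integral_nonneg fun _ => by positivity
  have h1 : ∫ x in D, ‖XI n J f x‖^2 ≤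
      ∑ I : Fin J.length → Fin (2*n), ∫ x in D, ‖XI n (List.ofFn I) f x‖^2 := by
    have := Finset.single_le_sum (f := fun I : Fin J.length → Fin (2*n) =>
      ∫ x in D, ‖XI n (List.ofFn I) f x‖^2) (fun I _ => h0 _) (Finset.mem_univ J.get)
    simpa [List.ofFn_get] using this
  refine h1.trans ?_
  exact Finset.single_le_sum (f := fun t => ∑ I : Fin t → Fin (2*n),
    ∫ x in D, ‖XI n (List.ofFn I) f x‖^2) (fun t _ => Finset.sum_nonneg fun I _ => h0 _)
    (Finset.mem_range.2 (by omega))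

theorem norm_lf_le {n : ℕ} (j) (x : VV n) : |lf n j x| ≤ ‖x‖ := by
  unfold lf
  split_ifs
  · exact norm_le_pi_norm x _
  · simp

theorem PH_near {n : ℕ} {x y : VV n} {R t : ℝ} (hx : ‖x‖ ≤ R) (hy : ‖y‖ ≤ 1) (ht : 0 < t)
    (ht1 : t ≤ 1) : dist (PH n x t y) x ≤ t * (2 + 2 * n * R) := by
  have hyi : ∀ i, |y i| ≤ 1 := fun i => (norm_le_pi_norm y i).trans hy
  have hB : |BB n x y| ≤ 2 * n * R := by
    rw [BB_apply]
    refine (Finset.abs_sum_le_sum_abs _ _).trans ?_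
    have : ∀ j ∈ (Finset.univ : Finset (Fin (2*n))), |lf n j x * y j.castSucc| ≤ R := by
      intro j _
      rw [abs_mul]
      have h1 := (norm_lf_le j x).trans hx
      have h2 := hyi j.castSucc
      have h3 := abs_nonneg (lf n j x)
      nlinarith [abs_nonneg (y j.castSucc)]
    refine (Finset.sum_le_card_nsmul _ _ _ this).trans ?_
    simp
  have hz : |zc n y| ≤ 1 := hyi _
  have he : ‖ez n‖ = 1 := by simp [ez, Pi.norm_single]
  rw [dist_eq_norm, PH, add_sub_cancel_left, LL_apply]
  refine (norm_add_le _ _).trans ?_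
  rw [norm_smul, norm_smul, he, mul_one, Real.norm_eq_abs, Real.norm_eq_abs, abs_mul, abs_of_pos ht]
  have h1 : |(t - 1) * zc n y + BB n x y| ≤ 1 + 2 * n * R := by
    refine (abs_add_le _ _).trans ?_
    rw [abs_mul]
    have : |t - 1| ≤ 1 := by rw [abs_le]; constructor <;> linarith
    have := mul_le_mul this hz (abs_nonneg _) zero_le_one
    linarith
  nlinarith

theorem cutoff {n : ℕ} {D : Set (VV n)} (hD : IsOpen D) {f : VV n → E}
    (hf : ContDiffOn ℝ (⊤:ℕ∞) f D) {x : VV n} {ρ : ℝ} (hρ : 0 < ρ) (hx : closedBall x ρ ⊆ D) :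
    ∃ g : VV n → E, ContDiff ℝ (⊤:ℕ∞) g ∧ ∀ y ∈ closedBall x (ρ/2), f =ᶠ[𝓝 y] g := by
  let χ : ContDiffBump x := ⟨3/4*ρ, ρ, by positivity, by linarith⟩
  refine ⟨fun y => χ y • f y, ?_, ?_⟩
  · rw [contDiff_iff_contDiffAt]
    intro y
    by_cases hy : y ∈ D
    · exact χ.contDiff.contDiffAt.smul ((hf y hy).contDiffAt (hD.mem_nhds hy))
    · have hy' : y ∉ tsupport χ := by
        rw [χ.tsupport_eq]; exact fun h => hy (hx h)
      have : (fun y => χ y • f y) =ᶠ[𝓝 y] fun _ => 0 := by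
        filter_upwards [(isClosed_tsupport χ).isOpen_compl.mem_nhds hy'] with z hz
        rw [image_eq_zero_of_notMem_tsupport hz, zero_smul]
      exact contDiffAt_const.congr_of_eventuallyEq this
  · intro y hy
    have : y ∈ ball x χ.rIn := by
      rw [mem_ball]; rw [mem_closedBall] at hy
      show dist y x < 3/4*ρ
      linarith
    filter_upwards [χ.eventuallyEq_one_of_mem_ball this] with z hz
    rw [hz]; simp

/-- Folland–Stein Sobolev estimate: for `s = k + n + 2`,
`sup_{cl D'} |X_I f| ≤ C ‖f‖_{D,s}` for `|I| ≤ k`. -/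
theorem statement1 (n m k : ℕ) (hn : 1 ≤ n)
    (D D' : Set (Fin (2*n+1) → ℝ)) (hD : IsOpen D) (hDb : IsBounded D)
    (hD' : IsOpen D') (hD'b : IsBounded D') (hsub : closure D' ⊆ D) :
    ∃ C > (0:ℝ), ∀ f : (Fin (2*n+1) → ℝ) → (Fin m → ℝ),
      ContDiffOn ℝ (⊤:ℕ∞) f (closure D) →
      ∀ I : List (Fin (2*n)), I.length ≤ k →
      ∀ x ∈ closure D', ‖XI n I f x‖ ≤ C * fsNorm n D (k + n + 2) f := by
  have hK : IsCompact (closure D') := hD'b.isCompact_closure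
  obtain ⟨ρ, hρ, hρD⟩ := hK.exists_cthickening_subset_open hD hsub
  obtain ⟨R0, hR0⟩ := hK.isBounded.exists_norm_le
  set R := max R0 0 with hR
  have hRx : ∀ x ∈ closure D', ‖x‖ ≤ R := fun x hx => (hR0 x hx).trans (le_max_left _ _)
  have hRp : 0 ≤ R := le_max_right _ _
  have hden : 0 < 2 + 2 * n * R := by positivity
  set r := min 1 (ρ / 2 / (2 + 2 * n * R)) with hr
  have hr0 : 0 < r := lt_min one_pos (by positivity)
  obtain ⟨C, hC0, hC⟩ := core (E := Fin m → ℝ) hn hr0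
  refine ⟨C + 1, by linarith, ?_⟩
  intro f hf I hI x hx
  have hball : closedBall x ρ ⊆ D := (closedBall_subset_cthickening hx ρ).trans hρD
  obtain ⟨g, hg, hfg⟩ := cutoff hD (hf.mono subset_closure) hρ hball
  have hfs0 : 0 ≤ fsNorm n D (k + n + 2) f := Real.sqrt_nonneg _
  have hsq : fsNormSq n D (k + n + 2) f = fsNorm n D (k + n + 2) f ^ 2 := by
    rw [fsNorm, Real.sq_sqrt]
    exact Finset.sum_nonneg fun t _ => Finset.sum_nonneg fun I _ =>
      integral_nonneg fun _ => by positivity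
  have hUD : closedBall x (ρ/2) ⊆ D := (closedBall_subset_closedBall (by linarith)).trans hball
  have hxU : x ∈ closedBall x (ρ/2) := mem_closedBall_self (by positivity)
  have main : ∀ M, fsNorm n D (k + n + 2) f < M → ‖XI n I f x‖ ≤ C * M := by
    intro M hM
    rw [(XI_congr (hfg x hxU) I).self_of_nhds]
    refine hC _ (contDiff_XI I hg) x M (hfs0.trans_lt hM) (closedBall x (ρ/2))
      (isCompact_closedBall _ _) ?_ ?_
    · intro t ht htr y hy
      rw [mem_closedBall]
      refine (PH_near (hRx x hx) (by simpa using hy) ht (htr.trans (min_le_left _ _))).trans ?_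
      have : t ≤ ρ / 2 / (2 + 2 * n * R) := htr.trans (min_le_right _ _)
      rwa [le_div_iff₀ hden] at this
    · intro J hJ
      rw [XI_append]
      have e : ∫ y in closedBall x (ρ/2), ‖XI n (J ++ I) g y‖^2
          = ∫ y in closedBall x (ρ/2), ‖XI n (J ++ I) f y‖^2 := by
        refine setIntegral_congr_fun measurableSet_closedBall fun y hy => ?_
        rw [(XI_congr (hfg y hy) (J ++ I)).self_of_nhds]
      rw [e]
      calc ∫ y in closedBall x (ρ/2), ‖XI n (J ++ I) f y‖^2
          ≤ ∫ y in D, ‖XI n (J ++ I) f y‖^2 :=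
            setIntegral_mono_set (XI_intOn hD hDb hf _)
              (Eventually.of_forall fun y => by positivity) hUD.eventuallyLE
        _ ≤ fsNormSq n D (k + n + 2) f :=
            le_fsNormSq f _ (by rw [List.length_append]; omega)
        _ ≤ M^2 := by rw [hsq]; gcongr
  have h2 : ‖XI n I f x‖ ≤ C * fsNorm n D (k + n + 2) f := by
    refine ge_of_tendsto (x := 𝓝[>] (fsNorm n D (k + n + 2) f)) (f := fun M => C * M) ?_ ?_
    · exact ((continuous_const.mul continuous_id).tendsto _).mono_left nhdsWithin_le_nhds
    · filter_upwards [self_mem_nhdsWithin] with M hM using main M hM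
  linarith

end
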